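/- arXiv:cs/0509032 — 2 statements merged into one kernel-verified Lean document; each statement's English description precedes it below -/
import Mathlib

section
/- Let k ≥ 2 be an integer and let α > 1/k, r > 0 and 0 < p ≤ (k-1)/k be real constants with r < r_cr = -α/ln(1-p). Let N denote the number of satisfying assignments of a random RB(k,n,α,r,p) instance, let t be any fixed total assignment, and let E_f[N] = E[N·1_{t ∈ S}]/Pr[t ∈ S] be the expected number of solutions of instances forced to have solution t (the model conditioned on t being a solution). Then E_f[N]/E[N] → 1 as n → ∞; that is, below the threshold the forcing strategy asymptotically does not change the expected number of solutions. -/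
namespace RB

/-- A (raw) constraint over `n` variables with common domain `Fin d`:
a scope (set of variables) together with a set of forbidden tuples,
i.e. forbidden functions from the scope to the domain. -/
abbrev Constraint (n d : ℕ) : Type := Σ s : Finset (Fin n), Finset (↥s → Fin d)

/-- A constraint of model RB: scope of exactly `k` variables and exactly `q` forbidden tuples. -/
abbrev ValidConstraint (k n d q : ℕ) : Type :=
  {c : Constraint n d // c.1.card = k ∧ c.2.card = q}

/-- An instance of model RB: a sequence of `m` constraints (chosen with repetition). -/
abbrev Instance (k n d q m : ℕ) : Type := Fin m → ValidConstraint k n d q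

/-- An assignment satisfies a constraint iff the tuple it induces on the scope is not forbidden. -/
def satisfies {n d : ℕ} (a : Fin n → Fin d) (c : Constraint n d) : Prop :=
  (fun i : ↥c.1 => a i.1) ∉ c.2

/-- An assignment satisfies an instance iff it satisfies all its constraints. -/
def satInstance {k n d q m : ℕ} (a : Fin n → Fin d) (P : Instance k n d q m) : Prop :=
  ∀ i : Fin m, satisfies a (P i).1

open scoped Classical in
/-- The probability (uniform over instances, i.e. constraints chosen independently,
uniformly and with repetition) that a random instance is satisfiable. -/
noncomputable def prSat (k n d q m : ℕ) : ℝ :=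
  ((Finset.univ.filter fun P : Instance k n d q m =>
      ∃ a : Fin n → Fin d, satInstance a P).card : ℝ)
    / (Fintype.card (Instance k n d q m))

/-- Domain size `d = ⌈n^α⌉`. -/
noncomputable def dOf (α : ℝ) (n : ℕ) : ℕ := ⌈(n : ℝ) ^ α⌉₊

/-- Number of constraints `m = ⌈r · n · ln n⌉`. -/
noncomputable def mOf (r : ℝ) (n : ℕ) : ℕ := ⌈r * n * Real.log n⌉₊

/-- Number of forbidden tuples `q = ⌈p · d^k⌉`. -/
noncomputable def qOf (p : ℝ) (k d : ℕ) : ℕ := ⌈p * (d : ℝ) ^ k⌉₊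

/-- Probability that a random instance of `RB(k,n,α,r,p)` is satisfiable. -/
noncomputable def prSatRB (k : ℕ) (α r p : ℝ) (n : ℕ) : ℝ :=
  prSat k n (dOf α n) (qOf p k (dOf α n)) (mOf r n)

end RB

namespace RB

open scoped Classical in
/-- The number of satisfying assignments (solutions) of an instance. -/
noncomputable def numSolutions {k n d q m : ℕ} (P : Instance k n d q m) : ℕ :=
  (Finset.univ.filter fun a : Fin n → Fin d => satInstance a P).card

/-- The first moment `E[N]` of the number of solutions of a random instance
(uniform over instances, i.e. constraints chosen independently, uniformly and
with repetition). -/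
noncomputable def expN (k n d q m : ℕ) : ℝ :=
  (∑ P : Instance k n d q m, (numSolutions P : ℝ)) / (Fintype.card (Instance k n d q m))

/-- The second moment `E[N²]` of the number of solutions of a random instance. -/
noncomputable def expNsq (k n d q m : ℕ) : ℝ :=
  (∑ P : Instance k n d q m, (numSolutions P : ℝ) ^ 2) / (Fintype.card (Instance k n d q m))

open scoped Classical in
/-- The expected number of solutions `E_f[N] = E[N·1_{t ∈ S}] / Pr[t ∈ S]` of instances
forced to admit the assignment `t` as a solution, i.e. of the uniform model conditioned
on the event that `t` is a solution. -/
noncomputable def expNForced (k n d q m : ℕ) (t : Fin n → Fin d) : ℝ :=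
  ((∑ P : Instance k n d q m, if satInstance t P then (numSolutions P : ℝ) else 0)
      / (Fintype.card (Instance k n d q m)))
    / (((Finset.univ.filter fun P : Instance k n d q m => satInstance t P).card : ℝ)
      / (Fintype.card (Instance k n d q m)))

end RB

namespace RB
open Finset

open scoped Classical in
lemma card_constr (k n d q : ℕ) (Z : Finset (Fin n → Fin d)) :
    (Finset.univ.filter fun c : ValidConstraint k n d q => ∀ z ∈ Z, satisfies z c.1).card
      = ∑ s ∈ Finset.powersetCard k (Finset.univ : Finset (Fin n)),
        (d ^ k - (Z.image (fun z => (fun i : ↥s => z i.1))).card).choose q := by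
  have h1 : (Finset.univ.filter fun c : ValidConstraint k n d q => ∀ z ∈ Z, satisfies z c.1).map
      (Function.Embedding.subtype _) =
      (Finset.powersetCard k (Finset.univ : Finset (Fin n))).sigma
        (fun s => Finset.powersetCard q
          (Finset.univ \ (Z.image (fun z => (fun i : ↥s => z i.1))))) := by
    ext ⟨s, F⟩
    simp only [Finset.mem_map, Finset.mem_filter, Finset.mem_univ, true_and,
      Function.Embedding.subtype_apply, Finset.mem_sigma, Finset.mem_powersetCard,
      Finset.subset_univ]
    constructor
    · rintro ⟨⟨c, hc⟩, h, rfl⟩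
      refine ⟨hc.1, ?_, hc.2⟩
      intro x hx
      simp only [Finset.mem_sdiff, Finset.mem_univ, true_and, Finset.mem_image, not_exists]
      rintro z ⟨hz, rfl⟩
      exact h z hz hx
    · rintro ⟨hs, hF, hq⟩
      refine ⟨⟨⟨s, F⟩, hs, hq⟩, ?_, rfl⟩
      intro z hz hx
      have := hF hx
      simp only [Finset.mem_sdiff, Finset.mem_univ, true_and, Finset.mem_image, not_exists] at this
      exact this z ⟨hz, rfl⟩
  rw [← Finset.card_map (Function.Embedding.subtype _), h1, Finset.card_sigma]
  apply Finset.sum_congr rfl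
  intro s hs
  rw [Finset.mem_powersetCard] at hs
  rw [Finset.card_powersetCard, Finset.card_sdiff_of_subset (Finset.subset_univ _), Finset.card_univ]
  simp [hs.2]

open scoped Classical in
lemma card_inst (k n d q m : ℕ) (Z : Finset (Fin n → Fin d)) :
    (Finset.univ.filter fun P : Instance k n d q m => ∀ z ∈ Z, satInstance z P).card
      = (∑ s ∈ Finset.powersetCard k (Finset.univ : Finset (Fin n)),
        (d ^ k - (Z.image (fun z => (fun i : ↥s => z i.1))).card).choose q) ^ m := by
  rw [← card_constr]
  have : (Finset.univ.filter fun P : Instance k n d q m => ∀ z ∈ Z, satInstance z P)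
    = Fintype.piFinset (fun _ : Fin m =>
      Finset.univ.filter fun c : ValidConstraint k n d q => ∀ z ∈ Z, satisfies z c.1) := by
    ext P
    simp only [Finset.mem_filter, Finset.mem_univ, true_and, Fintype.mem_piFinset]
    exact ⟨fun h i z hz => h z hz i, fun h z hz i => h i z hz⟩
  rw [this, Fintype.card_piFinset]
  simp

/-- agreement number -/
def agr {n d : ℕ} (t a : Fin n → Fin d) : ℕ := (Finset.univ.filter fun i => t i = a i).card

lemma agr_le {n d : ℕ} (t a : Fin n → Fin d) : agr t a ≤ n := by
  unfold agr
  exact (Finset.card_le_univ _).trans (by simp)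

open scoped Classical in
lemma card_two (k n d q : ℕ) (t a : Fin n → Fin d) :
    (∑ s ∈ Finset.powersetCard k (Finset.univ : Finset (Fin n)),
        (d ^ k - (({t, a} : Finset (Fin n → Fin d)).image
          (fun z => (fun i : ↥s => z i.1))).card).choose q)
    = (agr t a).choose k * (d ^ k - 1).choose q
      + (n.choose k - (agr t a).choose k) * (d ^ k - 2).choose q := by
  set G := Finset.powersetCard k (Finset.univ.filter fun i => t i = a i) with hG
  have hsub : G ⊆ Finset.powersetCard k (Finset.univ : Finset (Fin n)) :=
    Finset.powersetCard_mono (Finset.subset_univ _)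
  rw [← Finset.sum_sdiff hsub, add_comm]
  congr 1
  · rw [Finset.sum_congr rfl (g := fun _ => (d ^ k - 1).choose q)]
    · rw [Finset.sum_const, hG, Finset.card_powersetCard]; rfl
    · intro s hs
      rw [hG, Finset.mem_powersetCard] at hs
      have : (fun i : ↥s => t i.1) = (fun i : ↥s => a i.1) := by
        funext i
        have := hs.1 i.2
        simpa using this
      rw [Finset.image_insert, Finset.image_singleton, this]
      simp
  · rw [Finset.sum_congr rfl (g := fun _ => (d ^ k - 2).choose q)]
    · rw [Finset.sum_const, Finset.card_sdiff_of_subset hsub, hG, Finset.card_powersetCard,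
        Finset.card_powersetCard]
      simp [agr]
    · intro s hs
      rw [hG, Finset.mem_sdiff, Finset.mem_powersetCard, Finset.mem_powersetCard] at hs
      have : (fun i : ↥s => t i.1) ≠ (fun i : ↥s => a i.1) := by
        intro h
        apply hs.2
        refine ⟨?_, hs.1.2⟩
        intro i hi
        have := congrFun h ⟨i, hi⟩
        simpa using this
      rw [Finset.image_insert, Finset.image_singleton, Finset.card_pair this]

open scoped Classical in
lemma card_inst_two (k n d q m : ℕ) (t a : Fin n → Fin d) :
    (Finset.univ.filter fun P : Instance k n d q m => satInstance t P ∧ satInstance a P).card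
      = ((agr t a).choose k * (d ^ k - 1).choose q
      + (n.choose k - (agr t a).choose k) * (d ^ k - 2).choose q) ^ m := by
  rw [← card_two, ← card_inst]
  congr 1
  ext P
  simp

open scoped Classical in
lemma card_inst_one (k n d q m : ℕ) (t : Fin n → Fin d) :
    (Finset.univ.filter fun P : Instance k n d q m => satInstance t P).card
      = (n.choose k * (d ^ k - 1).choose q) ^ m := by
  have := card_inst_two k n d q m t t
  simpa [agr] using this

lemma card_inst_zero (k n d q m : ℕ) :
    Fintype.card (Instance k n d q m) = (n.choose k * (d ^ k).choose q) ^ m := by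
  classical
  have := card_inst k n d q m ∅
  simpa using this

lemma expN_eq (k n d q m : ℕ) : expN k n d q m =
    (d : ℝ) ^ n * ((n.choose k * (d ^ k - 1).choose q : ℕ) : ℝ) ^ m
      / ((n.choose k * (d ^ k).choose q : ℕ) : ℝ) ^ m := by
  classical
  unfold expN
  rw [card_inst_zero, Nat.cast_pow]
  congr 1
  have : (∑ P : Instance k n d q m, (numSolutions P : ℝ)) =
      ∑ a : Fin n → Fin d,
        ((Finset.univ.filter fun P : Instance k n d q m => satInstance a P).card : ℝ) := by
    unfold numSolutions
    simp only [Finset.card_filter, Nat.cast_sum]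
    rw [Finset.sum_comm]
  rw [this]
  simp only [card_inst_one]
  simp

lemma expF_eq (k n d q m : ℕ) (t : Fin n → Fin d)
    (hk : k ≤ n) (hq : q + 1 ≤ d ^ k) : expNForced k n d q m t =
    (∑ a : Fin n → Fin d, (((agr t a).choose k * (d ^ k - 1).choose q
      + (n.choose k - (agr t a).choose k) * (d ^ k - 2).choose q : ℕ) : ℝ) ^ m)
      / ((n.choose k * (d ^ k - 1).choose q : ℕ) : ℝ) ^ m := by
  classical
  unfold expNForced
  have h0 : (Fintype.card (Instance k n d q m) : ℝ) ≠ 0 := by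
    rw [card_inst_zero]
    have h1 := Nat.choose_pos hk
    have h2 := Nat.choose_pos (show q ≤ d ^ k by omega)
    positivity
  rw [div_div_div_cancel_right₀ h0]
  congr 1
  · simp only [← Nat.cast_pow]
    simp only [← card_inst_two]
    simp only [numSolutions, Finset.card_filter, Nat.cast_sum]
    rw [Finset.sum_comm]
    apply Finset.sum_congr rfl; intro P _
    split_ifs with h
    · apply Finset.sum_congr rfl; intros
      simp [h]
    · simp [h]
  · rw [← Nat.cast_pow, ← card_inst_one k n d q m t]

/-- ratio base -/
noncomputable def Bf (k n q : ℕ) (D : ℝ) (s : ℕ) : ℝ :=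
  (D / (D - q)) * ((s.choose k : ℝ) / n.choose k
    + (1 - (s.choose k : ℝ) / n.choose k) * ((D - 1 - q) / (D - 1)))

lemma base_eq (k n q D s : ℕ) (hk : k ≤ n) (hs : s ≤ n) (hq : q + 1 ≤ D) (hD : 2 ≤ D) :
    ((s.choose k * (D - 1).choose q
      + (n.choose k - s.choose k) * (D - 2).choose q : ℕ) : ℝ)
      * ((n.choose k * D.choose q : ℕ) : ℝ)
      / ((n.choose k * (D - 1).choose q : ℕ) : ℝ) ^ 2 = Bf k n q D s := by
  have hle : s.choose k ≤ n.choose k := Nat.choose_le_choose k hs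
  obtain ⟨E, rfl⟩ : ∃ E, D = E + 2 := ⟨D - 2, by omega⟩
  have e1 : (E + 2 - 1) = E + 1 := rfl
  have e2 : (E + 2 - 2) = E := rfl
  rw [e1, e2]
  have c1 : ((E + 1).choose q : ℝ) * (E + 1 - q) = E.choose q * (E + 1) := by
    have := Nat.choose_mul_succ_eq E q
    have h := congrArg (Nat.cast : ℕ → ℝ) this
    push_cast [Nat.cast_sub (show q ≤ E + 1 by omega)] at h
    linarith
  have c2 : ((E + 2).choose q : ℝ) * (E + 2 - q) = (E + 1).choose q * (E + 2) := by
    have := Nat.choose_mul_succ_eq (E + 1) q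
    have h := congrArg (Nat.cast : ℕ → ℝ) this
    push_cast [Nat.cast_sub (show q ≤ E + 1 + 1 by omega)] at h
    linarith
  have hqE : (q : ℝ) ≤ E + 1 := by exact_mod_cast (show q ≤ E + 1 by omega)
  have hE0 : (0 : ℝ) ≤ E := by positivity
  have f0 : (n.choose k : ℝ) ≠ 0 := by exact_mod_cast (Nat.choose_pos hk).ne'
  have f1 : ((E + 1).choose q : ℝ) ≠ 0 := by
    exact_mod_cast (Nat.choose_pos (show q ≤ E + 1 by omega)).ne'
  have f2 : (E + 2 - q : ℝ) ≠ 0 := by linarith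
  have f3 : (E + 1 : ℝ) ≠ 0 := by linarith
  have g1 : (E.choose q : ℝ) = (E + 1).choose q * (E + 1 - q) / (E + 1) := by
    rw [eq_div_iff f3]; linarith
  have g2 : ((E + 2).choose q : ℝ) = (E + 1).choose q * (E + 2) / (E + 2 - q) := by
    rw [eq_div_iff f2]; linarith
  unfold Bf
  push_cast [Nat.cast_sub hle]
  rw [g1, g2]
  have e3 : (E + 2 - 1 : ℝ) = E + 1 := by ring
  rw [e3]
  field_simp

lemma ratio_eq (k n d q m : ℕ) (t : Fin n → Fin d)
    (hk : k ≤ n) (hq : q + 1 ≤ d ^ k) (hD : 2 ≤ d ^ k) :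
    expNForced k n d q m t / expN k n d q m =
      (∑ a : Fin n → Fin d, Bf k n q ((d : ℝ) ^ k) (agr t a) ^ m) / (d : ℝ) ^ n := by
  rw [expF_eq k n d q m t hk hq, expN_eq]
  have h (a : Fin n → Fin d) := base_eq k n q (d ^ k) (agr t a) hk (agr_le t a) hq hD
  push_cast at h
  simp only [← h, div_pow, mul_pow, ← Finset.sum_div, ← Finset.sum_mul]
  push_cast
  have h1 : (n.choose k : ℝ) ≠ 0 := by exact_mod_cast (Nat.choose_pos hk).ne'
  have h2 : ((d ^ k).choose q : ℝ) ≠ 0 := by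
    exact_mod_cast (Nat.choose_pos (show q ≤ d ^ k by omega)).ne'
  have h3 : ((d ^ k - 1).choose q : ℝ) ≠ 0 := by
    exact_mod_cast (Nat.choose_pos (show q ≤ d ^ k - 1 by omega)).ne'
  have h4 : (d : ℝ) ^ n ≠ 0 ∨ (d : ℝ) ^ n = 0 := by tauto
  rcases h4 with h4 | h4
  · generalize (∑ a : Fin n → Fin d, ((((agr t a).choose k : ℝ) * (d ^ k - 1).choose q
      + ((n.choose k - (agr t a).choose k : ℕ) : ℝ) * (d ^ k - 2).choose q ) ^ m)) = S
    field_simp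
    ring
  · simp [h4]

end RB
namespace RB
open Finset

lemma sigma_le (k n s : ℕ) (hs : s ≤ n) (hk : k ≤ n) (hk1 : 1 ≤ k) :
    (s.choose k : ℝ) / n.choose k ≤ ((s : ℝ) / n) ^ k := by
  have key : ∀ j : ℕ, s.descFactorial j * n ^ j ≤ n.descFactorial j * s ^ j := by
    intro j
    induction j with
    | zero => simp
    | succ j ih =>
      rw [Nat.descFactorial_succ, Nat.descFactorial_succ, pow_succ, pow_succ]
      have h1 : (s - j) * n ≤ (n - j) * s := by
        rw [Nat.sub_mul, Nat.sub_mul, mul_comm s n]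
        have : j * s ≤ j * n := Nat.mul_le_mul_left _ hs
        omega
      calc (s - j) * s.descFactorial j * (n ^ j * n)
          = (s.descFactorial j * n ^ j) * ((s - j) * n) := by ring
        _ ≤ (n.descFactorial j * s ^ j) * ((n - j) * s) := Nat.mul_le_mul ih h1
        _ = _ := by ring
  have h := key k
  rw [Nat.descFactorial_eq_factorial_mul_choose, Nat.descFactorial_eq_factorial_mul_choose,
    mul_assoc, mul_assoc] at h
  have h2 := Nat.le_of_mul_le_mul_left h (Nat.factorial_pos k)
  have h3 : (s.choose k : ℝ) * (n : ℝ) ^ k ≤ n.choose k * (s : ℝ) ^ k := by exact_mod_cast h2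
  have hn : (0 : ℝ) < n := by exact_mod_cast (by omega : 0 < n)
  have hc : (0 : ℝ) < n.choose k := by exact_mod_cast Nat.choose_pos hk
  rw [div_pow, div_le_div_iff₀ hc (by positivity)]
  linarith

lemma card_agr (n d s : ℕ) (t : Fin n → Fin d) (hs : s ≤ n) :
    (Finset.univ.filter fun a : Fin n → Fin d => agr t a = s).card ≤ n.choose s * d ^ (n - s) := by
  classical
  have hsub : (Finset.univ.filter fun a : Fin n → Fin d => agr t a = s) ⊆
      (Finset.powersetCard s (Finset.univ : Finset (Fin n))).biUnion
        (fun A => Fintype.piFinset (fun i => if i ∈ A then {t i} else Finset.univ)) := by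
    intro a ha
    simp only [Finset.mem_filter, Finset.mem_univ, true_and] at ha
    simp only [Finset.mem_biUnion, Finset.mem_powersetCard, Fintype.mem_piFinset]
    refine ⟨Finset.univ.filter fun i => t i = a i, ⟨Finset.subset_univ _, ha⟩, ?_⟩
    intro i
    by_cases h : t i = a i <;> simp [h]
  refine (Finset.card_le_card hsub).trans ?_
  have := Finset.card_biUnion_le_card_mul (Finset.powersetCard s (Finset.univ : Finset (Fin n)))
    (fun A => Fintype.piFinset (fun i => if i ∈ A then {t i} else Finset.univ)) (d ^ (n - s)) (by
      intro A hA
      rw [Finset.mem_powersetCard] at hA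
      rw [Fintype.card_piFinset]
      have : ∀ i, (if i ∈ A then ({t i} : Finset (Fin d)) else Finset.univ).card
          = if i ∈ A then 1 else d := by
        intro i; split_ifs <;> simp
      simp only [this]
      rw [Finset.prod_ite]
      simp only [Finset.prod_const_one, one_mul, Finset.prod_const]
      apply le_of_eq
      congr 1
      rw [Finset.filter_not, Finset.card_sdiff_of_subset (Finset.filter_subset _ _)]
      simp [hA.2])
  simpa using this

/-- Splitting bound. -/
lemma sum_split (n d : ℕ) (hd : 0 < d) (t : Fin n → Fin d) (G : ℕ → ℝ) (hG : ∀ s, 0 ≤ G s)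
    (M y : ℝ) (S : ℕ → Prop) (hM : ∀ s ≤ n, S s → G s ≤ M) (hM0 : 0 ≤ M)
    (hy0 : 0 ≤ y) (hy1 : y < 1) (hS0 : S 0)
    (htail : ∀ s ≤ n, ¬ S s → (n.choose s : ℝ) / (d : ℝ) ^ s * G s ≤ y ^ s) :
    (∑ a : Fin n → Fin d, G (agr t a)) / (d : ℝ) ^ n ≤ M + y / (1 - y) := by
  classical
  have hd' : (0 : ℝ) < d := by exact_mod_cast hd
  have h1 : (∑ a : Fin n → Fin d, G (agr t a)) ≤
      ∑ a : Fin n → Fin d, (M + if S (agr t a) then 0 else G (agr t a)) := by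
    apply Finset.sum_le_sum
    intro a _
    split_ifs with h
    · simpa using hM _ (agr_le t a) h
    · linarith
  have h2 : (∑ a : Fin n → Fin d, (if S (agr t a) then 0 else G (agr t a))) =
      ∑ s ∈ Finset.range (n + 1), ((Finset.univ.filter fun a : Fin n → Fin d => agr t a = s).card : ℝ)
        * (if S s then 0 else G s) := by
    rw [← Finset.sum_fiberwise_of_maps_to (s := Finset.univ) (t := Finset.range (n + 1))
      (g := fun a => agr t a) (by intro a _; simpa [Nat.lt_succ_iff] using agr_le t a)]
    apply Finset.sum_congr rfl
    intro s _
    rw [← nsmul_eq_mul, ← Finset.sum_const]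
    apply Finset.sum_congr rfl
    intro a ha
    simp only [Finset.mem_filter, Finset.mem_univ, true_and] at ha
    rw [ha]
  have h3 : ∀ s ∈ Finset.range (n + 1),
      ((Finset.univ.filter fun a : Fin n → Fin d => agr t a = s).card : ℝ)
        * (if S s then 0 else G s) ≤ (d : ℝ) ^ n * (if s = 0 then 0 else y ^ s) := by
    intro s hs
    have hs' : s ≤ n := by simpa [Nat.lt_succ_iff] using hs
    split_ifs with h h' h'
    · simp
    · have : 0 ≤ (d : ℝ) ^ n * y ^ s := by positivity
      simpa using this
    · subst h'; exact absurd hS0 h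
    · have hc : ((Finset.univ.filter fun a : Fin n → Fin d => agr t a = s).card : ℝ)
          ≤ n.choose s * (d : ℝ) ^ (n - s) := by exact_mod_cast card_agr n d s t hs'
      have hdd : (d : ℝ) ^ (n - s) = (d : ℝ) ^ n / (d : ℝ) ^ s := by
        rw [eq_div_iff (by positivity), ← pow_add, Nat.sub_add_cancel hs']
      calc _ ≤ (n.choose s * (d : ℝ) ^ (n - s)) * G s := mul_le_mul_of_nonneg_right hc (hG s)
        _ = (d : ℝ) ^ n * ((n.choose s : ℝ) / (d : ℝ) ^ s * G s) := by rw [hdd]; ring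
        _ ≤ _ := mul_le_mul_of_nonneg_left (htail s hs' h) (by positivity)
  have h4 : ∑ s ∈ Finset.range (n + 1), (if s = 0 then 0 else y ^ s) ≤ y / (1 - y) := by
    rw [Finset.sum_range_succ']
    simp only [Nat.add_eq_zero_iff, one_ne_zero, and_false, if_false, if_true, add_zero]
    have : ∑ i ∈ Finset.range n, y ^ (i + 1) = y * ∑ i ∈ Finset.range n, y ^ i := by
      rw [Finset.mul_sum]; apply Finset.sum_congr rfl; intros; ring
    rw [this, div_eq_mul_inv]
    apply mul_le_mul_of_nonneg_left _ hy0
    rw [← tsum_geometric_of_lt_one hy0 hy1]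
    exact (summable_geometric_of_lt_one hy0 hy1).sum_le_tsum _ (fun i _ => by positivity)
  rw [div_le_iff₀ (by positivity)]
  refine h1.trans ?_
  rw [Finset.sum_add_distrib, h2, Finset.sum_const, nsmul_eq_mul]
  have hcard : ((Finset.univ : Finset (Fin n → Fin d)).card : ℝ) = (d : ℝ) ^ n := by simp
  rw [hcard]
  have h5 := Finset.sum_le_sum h3
  rw [← Finset.mul_sum] at h5
  have h6 := mul_le_mul_of_nonneg_left h4 (show 0 ≤ (d : ℝ) ^ n by positivity)
  linarith

lemma Bf_lower (k n q : ℕ) (D : ℝ) (s : ℕ) (hs : s ≤ n) (hk : k ≤ n)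
    (hq : (q : ℝ) + 1 ≤ D) (hD : 2 ≤ D) :
    1 - q / ((D - 1) * (D - q)) ≤ Bf k n q D s := by
  have hc : (0 : ℝ) < n.choose k := by exact_mod_cast Nat.choose_pos hk
  have h1 : (s.choose k : ℝ) / n.choose k ≤ 1 := by
    rw [div_le_one hc]; exact_mod_cast Nat.choose_le_choose k hs
  have h0 : 0 ≤ (s.choose k : ℝ) / n.choose k := by positivity
  unfold Bf
  set x := (s.choose k : ℝ) / n.choose k
  have a1 : 0 < D - 1 := by linarith
  have a2 : 0 < D - q := by linarith
  have hq0 : (0 : ℝ) ≤ q := by positivity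
  have : 1 - q / ((D - 1) * (D - q)) = D / (D - q) * ((D - 1 - q) / (D - 1)) := by
    field_simp; ring
  rw [this]
  apply mul_le_mul_of_nonneg_left _ (by positivity)
  have : (D - 1 - q) / (D - 1) ≤ 1 := by rw [div_le_one a1]; linarith
  nlinarith

lemma Bf_upper (k n q : ℕ) (D : ℝ) (s : ℕ) (hs : s ≤ n) (hk : k ≤ n)
    (hq : (q : ℝ) + 1 ≤ D) (hD : 2 ≤ D) :
    Bf k n q D s ≤ 1 + (q / (D - q)) * ((s.choose k : ℝ) / n.choose k) := by
  have hc : (0 : ℝ) < n.choose k := by exact_mod_cast Nat.choose_pos hk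
  have h1 : (s.choose k : ℝ) / n.choose k ≤ 1 := by
    rw [div_le_one hc]; exact_mod_cast Nat.choose_le_choose k hs
  unfold Bf
  set x := (s.choose k : ℝ) / n.choose k
  have a1 : 0 < D - 1 := by linarith
  have a2 : 0 < D - q := by linarith
  have hq0 : (0 : ℝ) ≤ q := by positivity
  have e : (D - 1 - q) / (D - 1) ≤ (D - q) / D := by
    rw [div_le_div_iff₀ a1 (by linarith)]; nlinarith
  have : 1 + (q / (D - q)) * x = D / (D - q) * (x + (1 - x) * ((D - q) / D)) := by
    have : D ≠ 0 := by linarith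
    field_simp; ring
  rw [this]
  apply mul_le_mul_of_nonneg_left _ (div_nonneg (by linarith) a2.le)
  have := mul_le_mul_of_nonneg_left e (show 0 ≤ 1 - x by linarith)
  linarith

lemma Bf_nonneg (k n q : ℕ) (D : ℝ) (s : ℕ) (hs : s ≤ n) (hk : k ≤ n)
    (hq : (q : ℝ) + 1 ≤ D) (hD : 2 ≤ D) : 0 ≤ Bf k n q D s := by
  refine le_trans ?_ (Bf_lower k n q D s hs hk hq hD)
  have a1 : 0 < D - 1 := by linarith
  have a2 : 0 < D - q := by linarith
  rw [sub_nonneg, div_le_one (by positivity)]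
  nlinarith

/-- key convexity-type inequality -/
lemma log_ineq (k : ℕ) (hk : 1 ≤ k) (c x : ℝ) (hc : 0 < c) (hck : c ≤ k - 1)
    (hx0 : 0 < x) (hx1 : x ≤ 1) :
    Real.log (1 + c * x ^ k) ≤ x * Real.log (1 + c) := by
  -- log (1+u) ≤ k u / (1+u) on [0, k-1]
  have hh : ∀ u : ℝ, 0 ≤ u → u ≤ k - 1 → Real.log (1 + u) * (1 + u) ≤ k * u := by
    intro u hu0 hu1
    -- at w = 1 + u ≤ k, w log w ≤ k (w - 1) : use log w ≤ w-1, convexity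
    have hmono : AntitoneOn (fun u : ℝ => Real.log (1 + u) - (k : ℝ) * (1 - (1 + u)⁻¹))
        (Set.Icc 0 ((k : ℝ) - 1)) := by
      have hd : ∀ v : ℝ, 0 ≤ v → HasDerivAt
          (fun u : ℝ => Real.log (1 + u) - (k : ℝ) * (1 - (1 + u)⁻¹))
          (1 / (1 + v) - (k : ℝ) * (1 / (1 + v) ^ 2)) v := by
        intro v hv
        have hne : 1 + v ≠ 0 := by positivity
        have hid : HasDerivAt (fun u : ℝ => 1 + u) 1 v := (hasDerivAt_id v).const_add 1
        have e1 := hid.log hne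
        have e2 := ((hid.inv hne).const_sub 1).const_mul (k : ℝ)
        refine (e1.sub e2).congr_deriv ?_
        field_simp
      apply antitoneOn_of_deriv_nonpos (convex_Icc _ _)
      · intro v hv
        exact (hd v hv.1).continuousAt.continuousWithinAt
      · intro v hv
        rw [interior_Icc] at hv
        exact (hd v hv.1.le).differentiableAt.differentiableWithinAt
      · intro v hv
        rw [interior_Icc] at hv
        rw [(hd v hv.1.le).deriv]
        have : 0 < 1 + v := by linarith [hv.1]
        have h2 : 1 / (1 + v) - (k : ℝ) * (1 / (1 + v) ^ 2) = (1 + v - k) / (1 + v) ^ 2 := by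
          field_simp
        rw [h2]
        apply div_nonpos_of_nonpos_of_nonneg
        · linarith [hv.2]
        · positivity
    have := hmono (Set.mem_Icc.2 ⟨le_refl _, by linarith⟩) (Set.mem_Icc.2 ⟨hu0, hu1⟩) hu0
    simp only [add_zero, Real.log_one, inv_one, sub_self, mul_zero] at this
    have hp : 0 < 1 + u := by linarith
    have h3 : Real.log (1 + u) ≤ (k : ℝ) * (1 - (1 + u)⁻¹) := by linarith
    have h4 := mul_le_mul_of_nonneg_right h3 hp.le
    have h5 : (k : ℝ) * (1 - (1 + u)⁻¹) * (1 + u) = k * u := by field_simp; ring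
    linarith
  have hmono : MonotoneOn (fun y : ℝ => Real.log (1 + c * y ^ k) / y) (Set.Icc x 1) := by
    have hd : ∀ y : ℝ, 0 < y → HasDerivAt (fun y : ℝ => Real.log (1 + c * y ^ k) / y)
        (((c * (k * y ^ (k - 1))) / (1 + c * y ^ k) * y - Real.log (1 + c * y ^ k) * 1) / y ^ 2) y := by
      intro y hy
      have hne : 1 + c * y ^ k ≠ 0 := by positivity
      have e1 : HasDerivAt (fun y : ℝ => 1 + c * y ^ k) (c * (k * y ^ (k - 1))) y :=
        ((hasDerivAt_pow k y).const_mul c).const_add 1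
      exact (e1.log hne).div (hasDerivAt_id y) hy.ne'
    apply monotoneOn_of_deriv_nonneg (convex_Icc _ _)
    · intro v hv
      exact (hd v (by linarith [hv.1])).continuousAt.continuousWithinAt
    · intro v hv
      rw [interior_Icc] at hv
      exact (hd v (by linarith [hv.1])).differentiableAt.differentiableWithinAt
    · intro y hy
      rw [interior_Icc] at hy
      have hy0 : 0 < y := by linarith [hy.1]
      rw [(hd y hy0).deriv]
      apply div_nonneg _ (by positivity)
      have hyk : y ^ k ≤ 1 := pow_le_one₀ hy0.le hy.2.le
      have hyk0 : 0 < y ^ k := by positivity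
      have h1 := hh (c * y ^ k) (by positivity) (by nlinarith)
      have hpos : 0 < 1 + c * y ^ k := by positivity
      have h2 : Real.log (1 + c * y ^ k) ≤ k * (c * y ^ k) / (1 + c * y ^ k) := by
        rw [le_div_iff₀ hpos]; exact h1
      have h3 : (c * (k * y ^ (k - 1))) / (1 + c * y ^ k) * y = k * (c * y ^ k) / (1 + c * y ^ k) := by
        have : y ^ k = y ^ (k - 1) * y := by rw [← pow_succ, Nat.sub_add_cancel hk]
        rw [div_mul_eq_mul_div]
        congr 1
        rw [this]; ring
      rw [h3]; linarith
  have := hmono (Set.mem_Icc.2 ⟨le_refl _, hx1⟩) (Set.mem_Icc.2 ⟨hx1, le_refl _⟩) hx1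
  simp only [one_pow, mul_one, div_one] at this
  rw [div_le_iff₀ hx0] at this
  linarith

lemma choose_le_exp (n s : ℕ) (hs : 1 ≤ s) :
    (n.choose s : ℝ) ≤ (Real.exp 1 * n / s) ^ s := by
  have h1 : (n.choose s : ℝ) ≤ (n : ℝ) ^ s / (s.factorial : ℝ) := Nat.choose_le_pow_div s n
  have h2 : (s : ℝ) ^ s / s.factorial ≤ Real.exp s :=
    Real.pow_div_factorial_le_exp _ (by positivity) s
  have hs0 : (0 : ℝ) < s := by exact_mod_cast hs
  have hf : (0 : ℝ) < s.factorial := by exact_mod_cast Nat.factorial_pos s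
  have h3 : Real.exp (s : ℝ) = Real.exp 1 ^ s := by rw [← Real.exp_nat_mul]; simp
  refine h1.trans ?_
  rw [div_pow, mul_pow, ← h3, div_le_div_iff₀ hf (by positivity)]
  rw [div_le_iff₀ hf] at h2
  have := mul_le_mul_of_nonneg_left h2 (show 0 ≤ (n : ℝ) ^ s by positivity)
  linarith

end RB
namespace RB
open Filter Topology

lemma tail_pt (k n s m : ℕ) (hk : 2 ≤ k) (c r α γ ε η d : ℝ) (hc : 0 < c) (hck : c ≤ k - 1)
    (hr : 0 < r) (hε : 0 < ε) (hε1 : ε ≤ 1) (hη1 : η ≤ γ + α - 1 - c * r * ε)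
    (hη2 : η ≤ α - r * Real.log (1 + c)) (hn : 2 ≤ n) (hsn : s ≤ n)
    (hs : (n : ℝ) ^ γ < s) (hd : (n : ℝ) ^ α ≤ d) (hm : (m : ℝ) ≤ r * n * Real.log n + 1) :
    (n.choose s : ℝ) / d ^ s * (1 + c * ((s : ℝ) / n) ^ k) ^ m
      ≤ (Real.exp (1 + c) / ε * (n : ℝ) ^ (-η)) ^ s := by
  have hn0 : (0 : ℝ) < n := by exact_mod_cast (by omega : 0 < n)
  have hs0 : (0 : ℝ) < s := lt_trans (Real.rpow_pos_of_pos hn0 γ) hs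
  have hs1 : 1 ≤ s := by
    have : 0 < s := by exact_mod_cast hs0
    omega
  have hs1' : (1 : ℝ) ≤ s := by exact_mod_cast hs1
  have hd0 : 0 < d := lt_of_lt_of_le (Real.rpow_pos_of_pos hn0 α) hd
  set L := Real.log n with hL
  have hL0 : 0 < L := Real.log_pos (by exact_mod_cast (by omega : 1 < n))
  have hpow : ∀ e : ℝ, (n : ℝ) ^ e = Real.exp (L * e) := fun e => by
    rw [Real.rpow_def_of_pos hn0]
  set x := (s : ℝ) / n with hx
  have hx0 : 0 < x := by positivity
  have hx1 : x ≤ 1 := by rw [hx, div_le_one hn0]; exact_mod_cast hsn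
  have hxn : x * n = s := by rw [hx]; field_simp
  have hm0 : (0 : ℝ) ≤ m := by positivity
  have hdinv : 1 / d ≤ Real.exp (-(L * α)) := by
    rw [Real.exp_neg, one_div]
    apply inv_anti₀ (Real.exp_pos _)
    rw [← hpow]; exact hd
  -- reduction
  have red : ∀ Q : ℝ, (1 + c * x ^ k) ^ m ≤ Real.exp (s * Q) →
      (n : ℝ) / s * Real.exp (-(L * α)) * Real.exp Q ≤ Real.exp c / ε * Real.exp (L * (-η)) →
      (n.choose s : ℝ) / d ^ s * (1 + c * x ^ k) ^ m
        ≤ (Real.exp (1 + c) / ε * (n : ℝ) ^ (-η)) ^ s := by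
    intro Q h1 h2
    have h3 := choose_le_exp n s hs1
    calc (n.choose s : ℝ) / d ^ s * (1 + c * x ^ k) ^ m
        ≤ (Real.exp 1 * n / s) ^ s / d ^ s * Real.exp (s * Q) := by
          gcongr
      _ = (Real.exp 1 * (n / s * (1 / d) * Real.exp Q)) ^ s := by
          rw [Real.exp_nat_mul, ← div_pow, ← mul_pow]
          congr 1
          field_simp
      _ ≤ _ := by
          apply pow_le_pow_left₀ (by positivity)
          rw [hpow, Real.exp_add, mul_div_assoc, mul_assoc (Real.exp 1)]
          apply mul_le_mul_of_nonneg_left _ (Real.exp_pos 1).le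
          refine le_trans ?_ h2
          gcongr
  by_cases hxe : x ≤ ε
  · apply red (c * r * ε * L + c)
    · have h1 : 1 + c * x ^ k ≤ Real.exp (c * x ^ k) := by
        linarith [Real.add_one_le_exp (c * x ^ k)]
      have h2 : (1 + c * x ^ k) ^ m ≤ Real.exp (m * (c * x ^ k)) := by
        rw [Real.exp_nat_mul]
        exact pow_le_pow_left₀ (by positivity) h1 m
      refine h2.trans (Real.exp_le_exp.2 ?_)
      have hxk : x ^ k ≤ x * ε := by
        have : x ^ k ≤ x ^ 2 := pow_le_pow_of_le_one hx0.le hx1 hk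
        nlinarith
      calc m * (c * x ^ k) ≤ (r * n * L + 1) * (c * (x * ε)) := by gcongr
        _ = (x * n) * (c * r * ε * L) + c * (x * ε) := by ring
        _ ≤ s * (c * r * ε * L) + c * s := by
          rw [hxn]
          have : x * ε ≤ s := by nlinarith
          gcongr
        _ = _ := by ring
    · have h1 : (n : ℝ) / s ≤ Real.exp (L * (1 - γ)) := by
        rw [← hpow, Real.rpow_sub hn0, Real.rpow_one]
        have := Real.rpow_pos_of_pos hn0 γ
        gcongr
      have h2 : Real.exp c ≤ Real.exp c / ε := by
        rw [le_div_iff₀ hε]; nlinarith [Real.exp_pos c]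
      calc _ ≤ Real.exp (L * (1 - γ)) * Real.exp (-(L * α)) * Real.exp (c * r * ε * L + c) := by
            gcongr
        _ = Real.exp c * Real.exp (L * (1 - γ - α + c * r * ε)) := by
            rw [← Real.exp_add, ← Real.exp_add, ← Real.exp_add]; congr 1; ring
        _ ≤ _ := by
            have : L * (1 - γ - α + c * r * ε) ≤ L * (-η) := by
              apply mul_le_mul_of_nonneg_left _ hL0.le; linarith
            have h3 := Real.exp_le_exp.2 this
            exact mul_le_mul h2 h3 (Real.exp_pos _).le (by positivity)
  · push Not at hxe
    have hl0 : 0 ≤ Real.log (1 + c) := Real.log_nonneg (by linarith)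
    have hlc : Real.log (1 + c) ≤ c := by
      have := Real.log_le_sub_one_of_pos (show 0 < 1 + c by linarith); linarith
    apply red (r * Real.log (1 + c) * L + c)
    · have hpos : 0 < 1 + c * x ^ k := by positivity
      have h2 : (1 + c * x ^ k) ^ m = Real.exp (m * Real.log (1 + c * x ^ k)) := by
        rw [Real.exp_nat_mul, Real.exp_log hpos]
      rw [h2]
      apply Real.exp_le_exp.2
      have h3 := log_ineq k (by omega) c x hc hck hx0 hx1
      calc m * Real.log (1 + c * x ^ k) ≤ m * (x * Real.log (1 + c)) := by gcongr
        _ ≤ (r * n * L + 1) * (x * Real.log (1 + c)) := by gcongr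
        _ = (x * n) * (r * Real.log (1 + c) * L) + x * Real.log (1 + c) := by ring
        _ ≤ s * (r * Real.log (1 + c) * L) + s * c := by
          rw [hxn]
          have : x ≤ s := by linarith
          gcongr
        _ = _ := by ring
    · have h1 : (n : ℝ) / s ≤ 1 / ε := by
        rw [div_le_div_iff₀ hs0 hε]
        nlinarith
      calc _ ≤ 1 / ε * Real.exp (-(L * α)) * Real.exp (r * Real.log (1 + c) * L + c) := by
            gcongr
        _ = Real.exp c / ε * Real.exp (L * (-α + r * Real.log (1 + c))) := by
            rw [mul_assoc, ← Real.exp_add, div_mul_eq_mul_div, div_mul_eq_mul_div, one_mul,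
              ← Real.exp_add]
            congr 2; ring
        _ ≤ _ := by
            have : L * (-α + r * Real.log (1 + c)) ≤ L * (-η) := by
              apply mul_le_mul_of_nonneg_left _ hL0.le; linarith
            have h3 := Real.exp_le_exp.2 this
            gcongr

lemma mOf_le (r : ℝ) (hr : 0 < r) (n : ℕ) : (mOf r n : ℝ) ≤ r * n * Real.log n + 1 := by
  unfold mOf
  apply (Nat.ceil_lt_add_one _).le
  have := Real.log_natCast_nonneg n
  positivity

lemma lim_m (r τ : ℝ) (hr : 0 < r) (hτ : 1 < τ) :
    Tendsto (fun n : ℕ => (mOf r n : ℝ) * (n : ℝ) ^ (-τ)) atTop (𝓝 0) := by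
  have h1 : Tendsto (fun x : ℝ => Real.log x / x ^ (τ - 1)) atTop (𝓝 0) :=
    (isLittleO_log_rpow_atTop (by linarith)).tendsto_div_nhds_zero
  have h2 : Tendsto (fun x : ℝ => x ^ (-τ)) atTop (𝓝 0) :=
    tendsto_rpow_neg_atTop (by linarith)
  have h3 : Tendsto (fun n : ℕ => r * (Real.log (n : ℝ) / (n : ℝ) ^ (τ - 1)) + (n : ℝ) ^ (-τ))
      atTop (𝓝 0) := by
    have := ((h1.const_mul r).add h2).comp tendsto_natCast_atTop_atTop
    simpa [Function.comp_def] using this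
  refine squeeze_zero' (Eventually.of_forall fun n => by positivity) ?_ h3
  filter_upwards [eventually_ge_atTop 1] with n hn
  have hn0 : (0 : ℝ) < n := by exact_mod_cast hn
  have hp := Real.rpow_pos_of_pos hn0 (-τ)
  calc (mOf r n : ℝ) * (n : ℝ) ^ (-τ) ≤ (r * n * Real.log n + 1) * (n : ℝ) ^ (-τ) := by
        gcongr; exact mOf_le r hr n
    _ = r * (Real.log n * ((n : ℝ) ^ (1 : ℝ) * (n : ℝ) ^ (-τ))) + (n : ℝ) ^ (-τ) := by
        rw [Real.rpow_one]; ring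
    _ = r * (Real.log n * ((n : ℝ) ^ (τ - 1))⁻¹) + (n : ℝ) ^ (-τ) := by
        rw [← Real.rpow_add hn0, ← Real.rpow_neg hn0.le]
        congr 4; ring
    _ = _ := by rw [div_eq_mul_inv]

set_option maxHeartbeats 2000000 in
lemma ratio_bounds (k n d q m : ℕ) (hk : 2 ≤ k) (α r p γ ε η : ℝ) (hr : 0 < r) (hp0 : 0 < p)
    (hp1 : p < 1) (hck : p / (1 - p) ≤ k - 1)
    (hε : 0 < ε) (hε1 : ε ≤ 1) (hη1 : η ≤ γ + α - 1 - p / (1 - p) * r * ε)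
    (hη2 : η ≤ α - r * Real.log (1 + p / (1 - p))) (hn : 2 ≤ n) (hkn : k ≤ n)
    (hd : (n : ℝ) ^ α ≤ d) (hm : (m : ℝ) ≤ r * n * Real.log n + 1)
    (hD : 2 ≤ (1 - p) * (d : ℝ) ^ k) (hq0 : p * (d : ℝ) ^ k ≤ q) (hq1 : q ≤ p * (d : ℝ) ^ k + 1)
    (hy : Real.exp (1 + p / (1 - p)) / ε * (n : ℝ) ^ (-η) < 1)
    (t : Fin n → Fin d) :
    1 - 4 / (1 - p) * (m * (n : ℝ) ^ (-(α * k))) ≤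
      expNForced k n d q m t / expN k n d q m ∧
    expNForced k n d q m t / expN k n d q m ≤
      Real.exp (2 / (1 - p) ^ 2 * (m * (n : ℝ) ^ (-(α * k)))) *
        (Real.exp (p / (1 - p) * (m * (n : ℝ) ^ (-((1 - γ) * k)))) +
          Real.exp (1 + p / (1 - p)) / ε * (n : ℝ) ^ (-η) /
            (1 - Real.exp (1 + p / (1 - p)) / ε * (n : ℝ) ^ (-η))) := by
  have hn0 : (0 : ℝ) < n := by exact_mod_cast (by omega : 0 < n)
  have hd0' : (0 : ℝ) < d := lt_of_lt_of_le (Real.rpow_pos_of_pos hn0 α) hd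
  have hd0 : 0 < d := by exact_mod_cast hd0'
  have hp' : 0 < 1 - p := by linarith
  set c := p / (1 - p) with hc
  have hc0 : 0 < c := by positivity
  set D := (d : ℝ) ^ k with hDdef
  have hDpos : 0 < D := by positivity
  have hD2 : 2 ≤ D := by nlinarith
  have hqD : (q : ℝ) + 1 ≤ D := by nlinarith
  have hDq : (1 - p) * D / 2 ≤ D - q := by nlinarith
  have hDinv : 1 / D ≤ (n : ℝ) ^ (-(α * k)) := by
    rw [Real.rpow_neg hn0.le, one_div]
    apply inv_anti₀ (Real.rpow_pos_of_pos hn0 _)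
    rw [Real.rpow_mul hn0.le, Real.rpow_natCast, hDdef]
    exact pow_le_pow_left₀ (Real.rpow_pos_of_pos hn0 _).le hd k
  have hqDn : q + 1 ≤ d ^ k := by
    have : ((q + 1 : ℕ) : ℝ) ≤ ((d ^ k : ℕ) : ℝ) := by push_cast; exact hqD
    exact_mod_cast this
  have hD2n : 2 ≤ d ^ k := by
    have : ((2 : ℕ) : ℝ) ≤ ((d ^ k : ℕ) : ℝ) := by push_cast; exact hD2
    exact_mod_cast this
  rw [ratio_eq k n d q m t hkn hqDn hD2n, ← hDdef]
  have hdn : (0 : ℝ) < (d : ℝ) ^ n := by positivity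
  have hm0 : (0 : ℝ) ≤ m := by positivity
  constructor
  · have key : ∀ a : Fin n → Fin d, 1 - 4 / (1 - p) * (m * (n : ℝ) ^ (-(α * k))) ≤
        Bf k n q D (agr t a) ^ m := by
      intro a
      have h1 := Bf_lower k n q D (agr t a) (agr_le t a) hkn hqD hD2
      have a1 : 0 < D - 1 := by linarith
      have a2 : 0 < D - q := by linarith
      have h0 := Bf_nonneg k n q D (agr t a) (agr_le t a) hkn hqD hD2
      set b := Bf k n q D (agr t a)
      have h2 := one_add_mul_le_pow (show (-2 : ℝ) ≤ b - 1 by linarith) m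
      have h3 : (q : ℝ) / ((D - 1) * (D - q)) ≤ 4 / (1 - p) * (1 / D) := by
        rw [div_mul_div_comm, mul_one, div_le_div_iff₀ (by positivity) (by positivity)]
        have e1 : (D / 2) * ((1 - p) * D / 2) ≤ (D - 1) * (D - q) := by
          apply mul_le_mul (by linarith) hDq (by positivity) a1.le
        have e2 : (q : ℝ) * ((1 - p) * D) ≤ D * ((1 - p) * D) := by
          gcongr; linarith
        nlinarith
      have h4 : 4 / (1 - p) * (1 / D) ≤ 4 / (1 - p) * (n : ℝ) ^ (-(α * k)) := by gcongr
      have h5 : -(4 / (1 - p) * (n : ℝ) ^ (-(α * k))) ≤ b - 1 := by linarith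
      have h6 := mul_le_mul_of_nonneg_left h5 hm0
      have h7 : 1 + (b - 1) = b := by ring
      rw [h7] at h2
      linarith
    rw [le_div_iff₀ hdn]
    have := Finset.sum_le_sum (s := Finset.univ) (fun a _ => key a)
    rw [Finset.sum_const, nsmul_eq_mul] at this
    have hcard : ((Finset.univ : Finset (Fin n → Fin d)).card : ℝ) = (d : ℝ) ^ n := by simp
    rw [hcard] at this
    linarith
  · set δ := 2 / (1 - p) ^ 2 * (n : ℝ) ^ (-(α * k)) with hδ
    have hδ0 : 0 ≤ δ := by positivity
    have hcd : (q : ℝ) / (D - q) ≤ c + δ := by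
      have a2 : 0 < D - q := by linarith
      have h1 : (q : ℝ) / (D - q) ≤ c + 2 / (1 - p) ^ 2 * (1 / D) := by
        have e : (q : ℝ) / (D - q) - c = (q - p * D) / ((D - q) * (1 - p)) := by
          rw [hc]; field_simp; ring
        have e2 : (q - p * D) / ((D - q) * (1 - p)) ≤ 1 / (((1 - p) * D / 2) * (1 - p)) := by
          gcongr; linarith
        have e3 : 1 / (((1 - p) * D / 2) * (1 - p)) = 2 / (1 - p) ^ 2 * (1 / D) := by
          field_simp
        linarith
      have h4 : 2 / (1 - p) ^ 2 * (1 / D) ≤ δ := by rw [hδ]; gcongr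
      linarith
    set G : ℕ → ℝ := fun s => (1 + c * ((s : ℝ) / n) ^ k) ^ m with hG
    have key : ∀ a : Fin n → Fin d, Bf k n q D (agr t a) ^ m ≤ Real.exp (m * δ) * G (agr t a) := by
      intro a
      have h1 := Bf_upper k n q D (agr t a) (agr_le t a) hkn hqD hD2
      have h0 := Bf_nonneg k n q D (agr t a) (agr_le t a) hkn hqD hD2
      have hsig := sigma_le k n (agr t a) (agr_le t a) hkn (by omega)
      have hx1 : (agr t a : ℝ) / n ≤ 1 := by
        rw [div_le_one hn0]; exact_mod_cast agr_le t a
      rw [hG, Real.exp_nat_mul, ← mul_pow]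
      apply pow_le_pow_left₀ h0
      refine h1.trans ?_
      set x := ((agr t a : ℝ) / n) ^ k with hx
      have hxk0 : 0 ≤ x := by positivity
      have hxk1 : x ≤ 1 := pow_le_one₀ (by positivity) hx1
      have h2 : (q : ℝ) / (D - q) * (((agr t a).choose k : ℝ) / n.choose k) ≤ (c + δ) * x := by
        apply mul_le_mul hcd hsig (by positivity) (by positivity)
      have h3 : 1 + δ ≤ Real.exp δ := by linarith [Real.add_one_le_exp δ]
      have h4 : (1 + δ) * (1 + c * x) ≤ Real.exp δ * (1 + c * x) := by gcongr
      have h5 : 0 ≤ δ * (1 - x) := mul_nonneg hδ0 (by linarith)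
      have h6 : 0 ≤ δ * (c * x) := by positivity
      nlinarith
    have hsum : (∑ a : Fin n → Fin d, Bf k n q D (agr t a) ^ m) / (d : ℝ) ^ n ≤
        Real.exp (m * δ) * ((∑ a : Fin n → Fin d, G (agr t a)) / (d : ℝ) ^ n) := by
      rw [← mul_div_assoc, Finset.mul_sum]
      gcongr with a
      exact key a
    refine hsum.trans ?_
    have e : (m : ℝ) * δ = 2 / (1 - p) ^ 2 * (m * (n : ℝ) ^ (-(α * k))) := by rw [hδ]; ring
    rw [e]
    apply mul_le_mul_of_nonneg_left _ (Real.exp_pos _).le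
    apply sum_split n d hd0 t G (fun s => by positivity) _ _ (fun s => (s : ℝ) ≤ (n : ℝ) ^ γ)
    · intro s hs hS
      have h1 : ((s : ℝ) / n) ^ k ≤ (n : ℝ) ^ (-((1 - γ) * k)) := by
        have : (n : ℝ) ^ (-((1 - γ) * k)) = ((n : ℝ) ^ γ / n) ^ k := by
          rw [← neg_mul, Real.rpow_mul hn0.le, Real.rpow_natCast, neg_sub, Real.rpow_sub hn0,
            Real.rpow_one]
        rw [this]
        gcongr
      calc G s ≤ (Real.exp (c * ((s : ℝ) / n) ^ k)) ^ m := by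
            apply pow_le_pow_left₀ (by positivity)
            linarith [Real.add_one_le_exp (c * ((s : ℝ) / n) ^ k)]
        _ = Real.exp (c * (m * ((s : ℝ) / n) ^ k)) := by
            rw [← Real.exp_nat_mul]; congr 1; ring
        _ ≤ _ := by gcongr
    · positivity
    · positivity
    · exact hy
    · simp only [Nat.cast_zero]; positivity
    · intro s hs hS
      push Not at hS
      exact tail_pt k n s m hk c r α γ ε η d hc0 hck hr hε hε1 hη1 hη2 hn hs hS hd hm

end RB
open Filter Topology

/-- **Forcing a solution does not change the expected number of solutions below the
threshold**: for an integer `k ≥ 2` and real constants `α > 1/k`, `r > 0`,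
`0 < p ≤ (k-1)/k` with `r < r_cr = -α / ln (1-p)`, and for any fixed total assignment
`t` (one for each `n`), the ratio `E_f[N]/E[N]` between the expected number of solutions
of instances of `RB(k,n,α,r,p)` forced to have solution `t` (the model conditioned on
`t` being a solution) and the expected number of solutions of unforced instances tends
to `1` as `n → ∞`. -/
theorem rb_forced_expected_solutions (k : ℕ) (hk : 2 ≤ k) (α r p : ℝ)
    (hα : 1 / (k : ℝ) < α) (hr : 0 < r) (hp0 : 0 < p) (hp1 : p ≤ ((k : ℝ) - 1) / k)
    (hrcr : r < -α / Real.log (1 - p))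
    (t : ∀ n : ℕ, Fin n → Fin (RB.dOf α n)) :
    Tendsto
      (fun n : ℕ =>
        RB.expNForced k n (RB.dOf α n) (RB.qOf p k (RB.dOf α n)) (RB.mOf r n) (t n) /
          RB.expN k n (RB.dOf α n) (RB.qOf p k (RB.dOf α n)) (RB.mOf r n))
      atTop (𝓝 1) := by
  have hk0 : (0 : ℝ) < k := by exact_mod_cast (by omega : 0 < k)
  have hα0 : 0 < α := lt_trans (by positivity) hα
  have hpk : p * k ≤ k - 1 := by rwa [le_div_iff₀ hk0] at hp1
  have hp : p < 1 := by nlinarith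
  have hp' : 0 < 1 - p := by linarith
  set c := p / (1 - p) with hc
  have hc0 : 0 < c := by positivity
  have hck : c ≤ k - 1 := by rw [hc, div_le_iff₀ hp']; nlinarith
  have hlog : Real.log (1 + c) = -Real.log (1 - p) := by
    rw [← Real.log_inv]; congr 1; rw [hc]; field_simp; ring
  have hβ : r * Real.log (1 + c) < α := by
    have hneg : Real.log (1 - p) < 0 := Real.log_neg hp' (by linarith)
    have : -α / Real.log (1 - p) = α / Real.log (1 + c) := by
      rw [hlog, div_neg, neg_div]
    rw [this, lt_div_iff₀ (by rw [hlog]; linarith)] at hrcr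
    exact hrcr
  have hkα : 1 < α * k := by rwa [div_lt_iff₀ hk0] at hα
  obtain ⟨γ, hγ1, hγ2⟩ : ∃ γ : ℝ, 1 - α < γ ∧ γ < 1 - 1 / (k : ℝ) :=
    exists_between (by linarith)
  have hγk : 1 < (1 - γ) * k := by
    have : 1 / (k : ℝ) < 1 - γ := by linarith
    rwa [div_lt_iff₀ hk0] at this
  have hg : 0 < γ + α - 1 := by linarith
  obtain ⟨ε, hε, hε1, hε2⟩ : ∃ ε : ℝ, 0 < ε ∧ ε ≤ 1 ∧ c * r * ε ≤ (γ + α - 1) / 2 := by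
    refine ⟨min 1 ((γ + α - 1) / 2 / (c * r)), by positivity, min_le_left _ _, ?_⟩
    have : min 1 ((γ + α - 1) / 2 / (c * r)) ≤ (γ + α - 1) / 2 / (c * r) := min_le_right _ _
    rw [le_div_iff₀ (by positivity)] at this
    linarith
  obtain ⟨η, hη, hη1, hη2⟩ : ∃ η : ℝ, 0 < η ∧ η ≤ (γ + α - 1) / 2 ∧
      η ≤ α - r * Real.log (1 + c) :=
    ⟨min ((γ + α - 1) / 2) (α - r * Real.log (1 + c)),
      lt_min (by linarith) (by linarith), min_le_left _ _, min_le_right _ _⟩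
  have hlm1 := RB.lim_m r (α * k) hr hkα
  have hlm2 := RB.lim_m r ((1 - γ) * k) hr hγk
  have hly : Tendsto (fun n : ℕ => Real.exp (1 + c) / ε * (n : ℝ) ^ (-η)) atTop (𝓝 0) := by
    have := ((tendsto_rpow_neg_atTop hη).comp tendsto_natCast_atTop_atTop).const_mul
      (Real.exp (1 + c) / ε)
    simpa using this
  have hlow : Tendsto (fun n : ℕ => 1 - 4 / (1 - p) * (RB.mOf r n * (n : ℝ) ^ (-(α * k))))
      atTop (𝓝 1) := by
    simpa using (hlm1.const_mul (4 / (1 - p))).const_sub 1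
  have hup : Tendsto (fun n : ℕ =>
      Real.exp (2 / (1 - p) ^ 2 * (RB.mOf r n * (n : ℝ) ^ (-(α * k)))) *
        (Real.exp (c * (RB.mOf r n * (n : ℝ) ^ (-((1 - γ) * k)))) +
          Real.exp (1 + c) / ε * (n : ℝ) ^ (-η) /
            (1 - Real.exp (1 + c) / ε * (n : ℝ) ^ (-η)))) atTop (𝓝 1) := by
    have t1 := (Real.continuous_exp.tendsto _).comp (hlm1.const_mul (2 / (1 - p) ^ 2))
    have t2 := (Real.continuous_exp.tendsto _).comp (hlm2.const_mul c)
    have t3 := hly.div (hly.const_sub 1) (by norm_num)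
    have := t1.mul (t2.add t3)
    simpa using this
  have hDlim : Tendsto (fun n : ℕ => (n : ℝ) ^ (α * k)) atTop atTop :=
    (tendsto_rpow_atTop (by linarith)).comp tendsto_natCast_atTop_atTop
  have hev : ∀ᶠ n : ℕ in atTop,
      1 - 4 / (1 - p) * (RB.mOf r n * (n : ℝ) ^ (-(α * k))) ≤
      RB.expNForced k n (RB.dOf α n) (RB.qOf p k (RB.dOf α n)) (RB.mOf r n) (t n) /
          RB.expN k n (RB.dOf α n) (RB.qOf p k (RB.dOf α n)) (RB.mOf r n) ∧
      RB.expNForced k n (RB.dOf α n) (RB.qOf p k (RB.dOf α n)) (RB.mOf r n) (t n) /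
          RB.expN k n (RB.dOf α n) (RB.qOf p k (RB.dOf α n)) (RB.mOf r n) ≤
      Real.exp (2 / (1 - p) ^ 2 * (RB.mOf r n * (n : ℝ) ^ (-(α * k)))) *
        (Real.exp (c * (RB.mOf r n * (n : ℝ) ^ (-((1 - γ) * k)))) +
          Real.exp (1 + c) / ε * (n : ℝ) ^ (-η) /
            (1 - Real.exp (1 + c) / ε * (n : ℝ) ^ (-η))) := by
    filter_upwards [eventually_ge_atTop k, hly.eventually (gt_mem_nhds zero_lt_one),
      hDlim.eventually_ge_atTop (2 / (1 - p))] with n hn hy hD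
    have hd : (n : ℝ) ^ α ≤ RB.dOf α n := Nat.le_ceil _
    have hD' : (n : ℝ) ^ (α * k) ≤ (RB.dOf α n : ℝ) ^ k := by
      rw [Real.rpow_mul (by positivity), Real.rpow_natCast]
      exact pow_le_pow_left₀ (by positivity) hd k
    refine RB.ratio_bounds k n _ _ _ hk α r p γ ε η hr hp0 hp hck hε hε1 (by linarith) hη2
      (by omega) hn hd (RB.mOf_le r hr n) ?_ (Nat.le_ceil _)
      (Nat.ceil_lt_add_one (by positivity)).le hy (t n)
    have := hD.trans hD'
    rw [div_le_iff₀ hp'] at this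
    linarith
  exact tendsto_of_tendsto_of_tendsto_of_le_of_le' hlow hup
    (hev.mono fun _ h => h.1) (hev.mono fun _ h => h.2)
end

section
/- Let H(δ) = -δ·ln δ - (1-δ)·ln(1-δ) for δ ∈ (0,1) denote the natural-logarithm binary entropy, extended by H(0) = H(1) = 0. Define f : [0,1] → ℝ by f(δ) = H(δ) + 4.25·ln((6 + (1-δ)³)/7). Then every point at which f attains its maximum over [0,1] lies in the open interval (0.23, 0.25); in particular, the maximizer of f is strictly less than 1/2, whereas the function g(δ) = H(δ) + 4.25·ln(7/8) attains its maximum over [0,1] exactly at δ = 1/2. -/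
/-- The natural-logarithm binary entropy `H(δ) = -δ·ln δ - (1-δ)·ln(1-δ)`
(since `Real.log 0 = 0`, this automatically extends by `H(0) = H(1) = 0`). -/
noncomputable def H (δ : ℝ) : ℝ := -δ * Real.log δ - (1 - δ) * Real.log (1 - δ)

/-- `f(δ) = H(δ) + 4.25·ln((6 + (1-δ)³)/7)`: the exponential growth rate of the expected
number of solutions at relative Hamming distance `δ` from the forced solution in forced
random 3-SAT at clause-to-variable ratio `4.25`. -/
noncomputable def f (δ : ℝ) : ℝ := H δ + 4.25 * Real.log ((6 + (1 - δ) ^ 3) / 7)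

/-- `g(δ) = H(δ) + 4.25·ln(7/8)`: the corresponding growth rate for unforced instances
relative to an arbitrary fixed assignment. -/
noncomputable def g (δ : ℝ) : ℝ := H δ + 4.25 * Real.log (7 / 8)

noncomputable def fder (x : ℝ) : ℝ :=
  Real.log (1 - x) - Real.log x - 12.75 * ((1 - x) ^ 2 / (6 + (1 - x) ^ 3))

lemma H_eq (x : ℝ) : H x = Real.binEntropy x := by
  simp [H, Real.binEntropy, Real.log_inv]; ring

lemma f_hasDeriv (x : ℝ) (h0 : 0 < x) (h1 : x < 1) : HasDerivAt f (fder x) x := by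
  have hp : (0 : ℝ) < 6 + (1 - x) ^ 3 := by
    have := pow_pos (sub_pos.2 h1) 3
    linarith
  have hH : HasDerivAt H (Real.log (1 - x) - Real.log x) x := by
    have : H = Real.binEntropy := funext H_eq
    rw [this]
    exact Real.hasDerivAt_binEntropy h0.ne' h1.ne
  have hq : HasDerivAt (fun y : ℝ => (6 + (1 - y) ^ 3) / 7) (-(3 * (1 - x) ^ 2) / 7) x := by
    have := ((((hasDerivAt_id x).const_sub 1).pow 3).const_add 6).div_const 7
    exact this.congr_deriv (by simp)
  have := hH.add ((hq.log (by positivity)).const_mul 4.25)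
  refine this.congr_deriv ?_
  unfold fder
  field_simp
  ring

lemma fder_hasDeriv (x : ℝ) (h0 : 0 < x) (h1 : x < 1) :
    HasDerivAt fder (-1 / (1 - x) - 1 / x - 12.75 * ((-(2 * (1 - x)) * (6 + (1 - x) ^ 3)
      - (1 - x) ^ 2 * (-(3 * (1 - x) ^ 2))) / (6 + (1 - x) ^ 3) ^ 2)) x := by
  have hp : (0 : ℝ) < 6 + (1 - x) ^ 3 := by
    have := pow_pos (sub_pos.2 h1) 3
    linarith
  have hl : HasDerivAt (fun y : ℝ => 1 - y) (-1) x := (hasDerivAt_id x).const_sub 1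
  have hq : HasDerivAt (fun y : ℝ => 6 + (1 - y) ^ 3) (-(3 * (1 - x) ^ 2)) x := by
    have := (hl.pow 3).const_add 6
    exact this.congr_deriv (by simp)
  have hs : HasDerivAt (fun y : ℝ => (1 - y) ^ 2) (-(2 * (1 - x))) x := by
    have := hl.pow 2
    exact this.congr_deriv (by simp)
  have h3 := ((hl.log (sub_pos.2 h1).ne').sub (Real.hasDerivAt_log h0.ne')).sub
    ((hs.div hq hp.ne').const_mul 12.75)
  exact h3.congr_deriv (by simp)

lemma fder_anti : StrictAntiOn fder (Set.Ioo 0 1) := by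
  apply strictAntiOn_of_deriv_neg (convex_Ioo 0 1)
  · intro x hx
    exact (fder_hasDeriv x hx.1 hx.2).continuousAt.continuousWithinAt
  · intro x hx
    rw [interior_Ioo] at hx
    obtain ⟨h0, h1⟩ := hx
    rw [(fder_hasDeriv x h0 h1).deriv]
    obtain ⟨t, rfl⟩ : ∃ t, x = 1 - t := ⟨1 - x, by ring⟩
    have ht : 0 < t := by linarith
    have ht1 : 0 < 1 - t := h0
    rw [sub_sub_cancel]
    have hp : 0 < 6 + t ^ 3 := by positivity
    have e : -1 / t - 1 / (1 - t) - 12.75 * ((-(2 * t) * (6 + t ^ 3)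
      - t ^ 2 * (-(3 * t ^ 2))) / (6 + t ^ 3) ^ 2) =
      -((6 + t ^ 3) ^ 2 - 12.75 * (t ^ 2 * (1 - t)) * (12 - t ^ 3)) /
        (t * (1 - t) * (6 + t ^ 3) ^ 2) := by
      field_simp
      ring
    rw [e]
    apply div_neg_of_neg_of_pos _ (by positivity)
    have k1 : t ^ 2 * (1 - t) ≤ 4 / 27 := by
      nlinarith [mul_nonneg (by linarith : 0 ≤ t + 1 / 3) (sq_nonneg (t - 2 / 3))]
    have k2 : 0 < t ^ 2 * (1 - t) := by positivity
    have k3 : 0 < t ^ 3 := by positivity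
    nlinarith [mul_pos k2 k3]

lemma fder_lo : 0 < fder 0.23 := by
  have h : (1.18 : ℝ) < Real.log (77 / 23) := by
    rw [Real.lt_log_iff_exp_lt (by norm_num)]
    have a : Real.exp (1.18 : ℝ) = Real.exp 1 * (Real.exp (-0.18))⁻¹ := by
      rw [← Real.exp_neg, ← Real.exp_add]; norm_num
    have b := Real.add_one_le_exp (-0.18 : ℝ)
    have c := Real.exp_one_lt_d9
    rw [a, ← div_eq_mul_inv, div_lt_iff₀ (Real.exp_pos _)]
    nlinarith
  have e : Real.log (77 / 23) = Real.log (1 - 0.23) - Real.log 0.23 := by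
    rw [← Real.log_div (by norm_num) (by norm_num)]; norm_num
  unfold fder
  rw [← e]
  norm_num at h ⊢
  linarith

lemma fder_hi : fder 0.25 < 0 := by
  have h : Real.log 3 < (1.116 : ℝ) := by
    rw [Real.log_lt_iff_lt_exp (by norm_num)]
    have a : Real.exp (1.116 : ℝ) = Real.exp 1 * Real.exp 0.116 := by
      rw [← Real.exp_add]; norm_num
    have b := Real.add_one_le_exp (0.116 : ℝ)
    have c := Real.exp_one_gt_d9
    rw [a]
    nlinarith
  have e : Real.log 3 = Real.log (1 - 0.25) - Real.log 0.25 := by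
    rw [← Real.log_div (by norm_num) (by norm_num)]; norm_num
  unfold fder
  rw [← e]
  norm_num at h ⊢
  linarith

lemma f_zero : f 0 = 0 := by norm_num [f, H]

lemma f_one : f 1 < 0 := by
  have : Real.log (6 / 7) < 0 := Real.log_neg (by norm_num) (by norm_num)
  norm_num [f, H]
  linarith

lemma f_half : 0 < f (1 / 2) := by
  have h : 0 < Real.log (2 ^ 4 * (7 / 8) ^ 17) := Real.log_pos (by norm_num)
  rw [Real.log_mul (by norm_num) (by norm_num), Real.log_pow, Real.log_pow] at h
  have e : ((6 : ℝ) + (1 - 1 / 2) ^ 3) / 7 = 7 / 8 := by norm_num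
  have e2 : H (1 / 2) = Real.log 2 := by
    rw [H_eq, one_div, Real.binEntropy_two_inv]
  unfold f
  rw [e, e2]
  norm_num at h ⊢
  linarith

/-- **Solutions of forced random 3-SAT instances cluster near the forced solution**:
every maximizer of `f` over `[0,1]` lies in the open interval `(0.23, 0.25)` — in
particular strictly below `1/2` — whereas `g` attains its maximum over `[0,1]`
exactly at `δ = 1/2`. -/
theorem threeSat_forced_solutions_cluster :
    (∀ δ ∈ Set.Icc (0 : ℝ) 1,
      (∀ x ∈ Set.Icc (0 : ℝ) 1, f x ≤ f δ) → δ ∈ Set.Ioo (0.23 : ℝ) 0.25) ∧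
    (∀ δ ∈ Set.Icc (0 : ℝ) 1,
      ((∀ x ∈ Set.Icc (0 : ℝ) 1, g x ≤ g δ) ↔ δ = 1 / 2)) := by
  constructor
  · intro δ hδ hmax
    have hhalf := hmax (1 / 2) (by norm_num)
    have h0 : 0 < δ := by
      rcases hδ.1.eq_or_lt with h | h
      · rw [← h, f_zero] at hhalf
        linarith [f_half]
      · exact h
    have h1 : δ < 1 := by
      rcases hδ.2.eq_or_lt with h | h
      · rw [h] at hhalf
        linarith [f_half, f_one]
      · exact h
    have hloc : IsLocalMax f δ := by
      filter_upwards [Icc_mem_nhds h0 h1] with x hx using hmax x hx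
    have hz : fder δ = 0 := hloc.hasDerivAt_eq_zero (f_hasDeriv δ h0 h1)
    constructor
    · by_contra hc
      have := fder_anti.antitoneOn ⟨h0, h1⟩ (by norm_num : (0.23 : ℝ) ∈ Set.Ioo (0 : ℝ) 1)
        (not_lt.1 hc)
      linarith [fder_lo]
    · by_contra hc
      have := fder_anti.antitoneOn (by norm_num : (0.25 : ℝ) ∈ Set.Ioo (0 : ℝ) 1) ⟨h0, h1⟩
        (not_lt.1 hc)
      linarith [fder_hi]
  · intro δ _
    simp only [g, add_le_add_iff_right, H_eq]
    constructor
    · intro h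
      have := h 2⁻¹ (by norm_num)
      rw [Real.binEntropy_two_inv] at this
      rw [one_div]
      exact Real.binEntropy_eq_log_two.1 (le_antisymm Real.binEntropy_le_log_two this)
    · rintro rfl x _
      rw [one_div, Real.binEntropy_two_inv]
      exact Real.binEntropy_le_log_two
end
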